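/- Conditional IPW identity: under the setup with G + C = 1 a.s., p(X) = E[G|X] with p(X) ≤ 1 − ε a.s., and Y integrable, we have E[Y | G = 1] = E[ (p(X) C / (1 − p(X))) · Y ] / E[ p(X) C / (1 − p(X)) ] whenever E[Y | X, C = 1] = E[Y | X, G = 1] almost surely (conditional mean independence of Y from treatment given X) and P(G=1) > 0. -/

import Mathlib

open MeasureTheory

lemma ipw_aux {Ω : Type*} (m : MeasurableSpace Ω) [mΩ : MeasurableSpace Ω] (μ : Measure Ω) [IsProbabilityMeasure μ]
    (hm : m ≤ mΩ)
    (G C Y : Ω → ℝ) (hGm : Measurable G) (hYm : Measurable Y)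
    (hGv : ∀ ω, G ω = 0 ∨ G ω = 1) (hGC : ∀ ω, G ω = 1 - C ω)
    (M : ℝ) (hYb : ∀ ω, |Y ω| ≤ M)
    (ε : ℝ) (hε : 0 < ε)
    (hover : ∀ᵐ ω ∂μ, (μ[G|m]) ω ≤ 1 - ε)
    (hcmi : ∀ᵐ ω ∂μ, 0 < (μ[G|m]) ω → 0 < (μ[C|m]) ω →
      (μ[fun ω' => Y ω' * G ω'|m]) ω / (μ[G|m]) ω
        = (μ[fun ω' => Y ω' * C ω'|m]) ω / (μ[C|m]) ω) :
    ∫ ω, (μ[G|m]) ω * C ω * Y ω / (1 - (μ[G|m]) ω) ∂μ = ∫ ω in {ω | G ω = 1}, Y ω ∂μ := by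
  have hC : C = fun ω => 1 - G ω := by funext ω; linarith [hGC ω]
  have hCm : Measurable C := by rw [hC]; fun_prop
  have hGi : Integrable G μ := by
    refine Integrable.of_bound hGm.aestronglyMeasurable 1 (ae_of_all _ fun ω => ?_)
    rcases hGv ω with h | h <;> simp [h]
  have hYi : Integrable Y μ :=
    Integrable.of_bound hYm.aestronglyMeasurable M (ae_of_all _ hYb)
  have hYG : Integrable (fun ω => Y ω * G ω) μ := by
    refine Integrable.of_bound (hYm.mul hGm).aestronglyMeasurable M (ae_of_all _ fun ω => ?_)
    have := hYb ω
    have h0 := (abs_nonneg _).trans this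
    rcases hGv ω with h | h <;> simp [h, this, h0]
  have hYC : Integrable (fun ω => Y ω * C ω) μ := by
    have : (fun ω => Y ω * C ω) = fun ω => Y ω - Y ω * G ω := by
      funext ω; rw [hC]; ring
    rw [this]; exact hYi.sub hYG
  have hp0 : 0 ≤ᵐ[μ] μ[G|m] := condExp_nonneg (ae_of_all _ fun ω => by
    rcases hGv ω with h | h <;> simp [h])
  have hpC : μ[C|m] =ᵐ[μ] fun ω => 1 - (μ[G|m]) ω := by
    rw [hC]
    have h := condExp_sub (μ := μ) (integrable_const (1:ℝ)) hGi m
    rw [condExp_const hm] at h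
    exact h
  have hup : μ[fun ω => Y ω * G ω|m] ≤ᵐ[μ] fun ω => M * (μ[G|m]) ω := by
    have h1 := condExp_mono (μ := μ) (m := m) hYG (hGi.const_mul M) (ae_of_all _ fun ω => by
      have := abs_le.1 (hYb ω)
      rcases hGv ω with h | h <;> simp [h, this])
    have h2 := condExp_smul (μ := μ) M G m
    exact h1.trans h2.le
  have hlo : (fun ω => (-M) * (μ[G|m]) ω) ≤ᵐ[μ] μ[fun ω => Y ω * G ω|m] := by
    have h1 := condExp_mono (μ := μ) (m := m) (hGi.const_mul (-M)) hYG (ae_of_all _ fun ω => by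
      have := abs_le.1 (hYb ω)
      rcases hGv ω with h | h <;> simp [h]; linarith)
    have h2 := condExp_smul (μ := μ) (-M) G m
    exact h2.symm.le.trans h1
  set w : Ω → ℝ := fun ω => (μ[G|m]) ω / (1 - (μ[G|m]) ω) with hw
  have hpm : Measurable[m] (μ[G|m]) := stronglyMeasurable_condExp.measurable
  have hwm : StronglyMeasurable[m] w :=
    (hpm.div (measurable_const.sub hpm)).stronglyMeasurable
  have hwi : Integrable (w * fun ω => Y ω * C ω) μ := by
    refine hYC.bdd_mul (c := 1 / ε) (hwm.mono hm).aestronglyMeasurable ?_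
    filter_upwards [hover, hp0] with ω h1 h0
    have h0' : 0 ≤ (μ[G|m]) ω := h0
    rw [hw, Real.norm_eq_abs, abs_of_nonneg (div_nonneg h0' (by linarith))]
    exact div_le_div₀ zero_le_one (by linarith) hε (by linarith)
  have hpull := condExp_mul_of_stronglyMeasurable_left hwm hwi hYC
  have hkey : μ[w * fun ω => Y ω * C ω|m] =ᵐ[μ] μ[fun ω => Y ω * G ω|m] := by
    filter_upwards [hpull, hover, hp0, hcmi, hpC, hup, hlo] with ω a b c d e f g
    rw [a, Pi.mul_apply]
    have c' : 0 ≤ (μ[G|m]) ω := c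
    have hpos : 0 < 1 - (μ[G|m]) ω := by linarith
    rcases c'.eq_or_lt with h | h
    · rw [← h] at f g
      simp only [hw, ← h]
      linarith
    · have d' := d h (by rw [e]; exact hpos)
      rw [e] at d'
      simp only [hw]
      field_simp at d' ⊢
      linarith
  have hset : MeasurableSet {ω | G ω = 1} := hGm (measurableSet_singleton 1)
  calc _ = ∫ ω, (w * fun ω => Y ω * C ω) ω ∂μ := by
        congr 1; funext ω; simp only [hw, Pi.mul_apply]; ring
    _ = ∫ ω, (μ[w * fun ω => Y ω * C ω|m]) ω ∂μ := (integral_condExp hm).symm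
    _ = ∫ ω, (μ[fun ω => Y ω * G ω|m]) ω ∂μ := integral_congr_ae hkey
    _ = ∫ ω, Y ω * G ω ∂μ := integral_condExp hm
    _ = _ := by
        rw [← integral_indicator hset]
        congr 1; funext ω
        rcases hGv ω with h | h <;> simp [Set.indicator, h]

/-- Conditional IPW identity: with G + C = 1 a.s., p(X) = E[G|X] ≤ 1 − ε a.s.,
Y bounded, P(G=1) > 0, and conditional mean independence
E[Y·G|X]/E[G|X] = E[Y·C|X]/E[C|X] a.s. on the set where both denominators are positive,
we have E[Y | G = 1] = E[ p(X)·C·Y/(1−p(X)) ] / E[ p(X)·C/(1−p(X)) ]. -/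
theorem stmt4 {Ω : Type*} [MeasurableSpace Ω] (μ : Measure Ω) [IsProbabilityMeasure μ]
    (X G C Y : Ω → ℝ) (hX : Measurable X) (hGm : Measurable G) (hYm : Measurable Y)
    (hGv : ∀ ω, G ω = 0 ∨ G ω = 1) (hGC : ∀ ω, G ω = 1 - C ω)
    (M : ℝ) (hYb : ∀ ω, |Y ω| ≤ M)
    (ε : ℝ) (hε : 0 < ε)
    (hover : ∀ᵐ ω ∂μ, (μ[G|MeasurableSpace.comap X inferInstance]) ω ≤ 1 - ε)
    (hPG : 0 < (μ {ω | G ω = 1}).toReal)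
    (hcmi : ∀ᵐ ω ∂μ,
      0 < (μ[G|MeasurableSpace.comap X inferInstance]) ω →
      0 < (μ[C|MeasurableSpace.comap X inferInstance]) ω →
      (μ[fun ω' => Y ω' * G ω'|MeasurableSpace.comap X inferInstance]) ω
          / (μ[G|MeasurableSpace.comap X inferInstance]) ω
        = (μ[fun ω' => Y ω' * C ω'|MeasurableSpace.comap X inferInstance]) ω
          / (μ[C|MeasurableSpace.comap X inferInstance]) ω) :
    (∫ ω in {ω | G ω = 1}, Y ω ∂μ) / (μ {ω | G ω = 1}).toReal
      = (∫ ω, (μ[G|MeasurableSpace.comap X inferInstance]) ω * C ω * Y ω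
            / (1 - (μ[G|MeasurableSpace.comap X inferInstance]) ω) ∂μ)
        / (∫ ω, (μ[G|MeasurableSpace.comap X inferInstance]) ω * C ω
            / (1 - (μ[G|MeasurableSpace.comap X inferInstance]) ω) ∂μ) := by
  have hm := hX.comap_le
  have h1 := ipw_aux _ μ hm G C Y hGm hYm hGv hGC M hYb ε hε hover hcmi
  have hC : C = fun ω => 1 - G ω := by funext ω; linarith [hGC ω]
  have h2 := ipw_aux _ μ hm G C (fun _ => 1) hGm measurable_const hGv hGC 1 (by simp) ε hε hover
    (by
      refine ae_of_all _ fun ω hg hc => ?_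
      simp only [one_mul]
      rw [div_self hg.ne', div_self hc.ne'])
  simp only [mul_one] at h2
  rw [h1, h2]
  simp [Measure.real]
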